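/- Let J be the ideal of ℂ[x_1,x_2,x_3] generated by { x_1², x_1x_2, x_2², x_1x_3 − (1/2)x_1 − (1/2)x_2, x_2x_3 − (1/2)x_1 − (1/2)x_2, x_3² − x_3 }. Then for every constant a ∈ ℂ and every polynomial g ∈ ℂ[x_1,x_2], the product (x_1 − a)·(x_3 − g) does not belong to J. In particular, although x_1x_3 is a minimal generator of the leading-monomial ideal T(J) for the lexicographical order induced by x_1 < x_2 < x_3, no element of a minimal lexicographical Gröbner basis of J with leading monomial x_1x_3 admits a factorization into factors of the form x_m − g_m with g_m ∈ ℂ[x_1,…,x_{m−1}]; thus the Axis of Evil factorization can fail for zero-dimensional ideals that are not radical. -/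

import Mathlib

/-!  STATEMENT 14.
For the (zero-dimensional, non-radical) ideal
`J = (x_1², x_1x_2, x_2², x_1x_3 − ½x_1 − ½x_2, x_2x_3 − ½x_1 − ½x_2, x_3² − x_3)`
of `ℂ[x_1,x_2,x_3]`, no product `(x_1 − a)(x_3 − g)` with `a ∈ ℂ` and
`g ∈ ℂ[x_1,x_2]` belongs to `J`, although `x_1x_3` is a minimal generator of the
leading-monomial ideal `T(J)` for the lex order induced by `x_1 < x_2 < x_3`:
the Axis of Evil factorization can fail for non-radical zero-dimensional ideals. -/

open MvPolynomial

/-- Lexicographical order induced by `x_1 < x_2 < x_3` on exponent vectors. -/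
def lexLt (a b : Fin 3 →₀ ℕ) : Prop :=
  ∃ j : Fin 3, a j < b j ∧ ∀ i : Fin 3, j < i → a i = b i

/-- `m` is the lex-leading monomial (exponent vector) of `f`. -/
def IsLeadMon (f : MvPolynomial (Fin 3) ℂ) (m : Fin 3 →₀ ℕ) : Prop :=
  m ∈ f.support ∧ ∀ e ∈ f.support, e ≠ m → lexLt e m

/-- `T(J)`: the set of lex-leading monomials of nonzero elements of `J`. -/
def LTset (J : Ideal (MvPolynomial (Fin 3) ℂ)) : Set (Fin 3 →₀ ℕ) :=
  {m | ∃ f ∈ J, f ≠ 0 ∧ IsLeadMon f m}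

/-- Minimal monomial generating set of a semigroup ideal of monomials:
its divisibility-minimal elements. -/
def minBasis (S : Set (Fin 3 →₀ ℕ)) : Set (Fin 3 →₀ ℕ) :=
  {m ∈ S | ∀ m' ∈ S, (∃ u, m = m' + u) → m' = m}

/-- Evaluation in the dual numbers kills the ideal. -/
theorem aev_zero (s t : ℂ) (p : Fin 3 → DualNumber ℂ)
    (h0 : p 0 = DualNumber.eps) (h1 : p 1 = algebraMap ℂ (DualNumber ℂ) s * DualNumber.eps)
    (h2 : p 2 = algebraMap ℂ (DualNumber ℂ) t) (hst : (s = 1 ∧ t = 1) ∨ (s = -1 ∧ t = 0))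
    (f : MvPolynomial (Fin 3) ℂ)
    (hf : f ∈ Ideal.span ({ X 0 ^ 2, X 0 * X 1, X 1 ^ 2,
        X 0 * X 2 - C (1 / 2 : ℂ) * X 0 - C (1 / 2 : ℂ) * X 1,
        X 1 * X 2 - C (1 / 2 : ℂ) * X 0 - C (1 / 2 : ℂ) * X 1,
        X 2 ^ 2 - X 2 } : Set (MvPolynomial (Fin 3) ℂ))) : aeval p f = 0 := by
  have key : Ideal.span ({ X 0 ^ 2, X 0 * X 1, X 1 ^ 2,
        X 0 * X 2 - C (1 / 2 : ℂ) * X 0 - C (1 / 2 : ℂ) * X 1,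
        X 1 * X 2 - C (1 / 2 : ℂ) * X 0 - C (1 / 2 : ℂ) * X 1,
        X 2 ^ 2 - X 2 } : Set (MvPolynomial (Fin 3) ℂ)) ≤ RingHom.ker (aeval (R := ℂ) p) := by
    rw [Ideal.span_le]
    intro q hq
    simp only [Set.mem_insert_iff, Set.mem_singleton_iff] at hq
    rw [SetLike.mem_coe, RingHom.mem_ker]
    rcases hst with ⟨rfl, rfl⟩ | ⟨rfl, rfl⟩ <;>
    rcases hq with rfl | rfl | rfl | rfl | rfl | rfl <;>
    · apply TrivSqZeroExt.ext <;>
      simp [h0, h1, h2, pow_two, DualNumber.fst_eps, DualNumber.snd_eps,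
        TrivSqZeroExt.algebraMap_eq_inl] <;> norm_num
  exact key hf

/-- Polynomials not involving the last variable do not see its value. -/
theorem aev_congr (p q : Fin 3 → DualNumber ℂ) (h0 : TrivSqZeroExt.fst (p 0) = 0)
    (h1 : TrivSqZeroExt.fst (p 1) = 0) (h0' : TrivSqZeroExt.fst (q 0) = 0)
    (h1' : TrivSqZeroExt.fst (q 1) = 0) (g : MvPolynomial (Fin 3) ℂ)
    (hg : ∀ m ∈ g.support, m 2 = 0) :
    TrivSqZeroExt.fst (aeval p g) = TrivSqZeroExt.fst (aeval q g) := by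
  rw [aeval_def, aeval_def, eval₂_eq', eval₂_eq', TrivSqZeroExt.fst_sum, TrivSqZeroExt.fst_sum]
  refine Finset.sum_congr rfl fun m hm => ?_
  simp [Fin.prod_univ_three, hg m hm, h0, h1, h0', h1']

theorem axis_of_evil_fails_non_radical
    (J : Ideal (MvPolynomial (Fin 3) ℂ))
    (hJ : J = Ideal.span
      { X 0 ^ 2, X 0 * X 1, X 1 ^ 2,
        X 0 * X 2 - C (1 / 2 : ℂ) * X 0 - C (1 / 2 : ℂ) * X 1,
        X 1 * X 2 - C (1 / 2 : ℂ) * X 0 - C (1 / 2 : ℂ) * X 1,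
        X 2 ^ 2 - X 2 }) :
    -- `x_1x_3` is a minimal generator of `T(J)` …
    (Finsupp.single (0 : Fin 3) 1 + Finsupp.single (2 : Fin 3) 1)
      ∈ minBasis (LTset J) ∧
    -- … but no product `(x_1 − a)(x_3 − g)` with `g ∈ ℂ[x_1,x_2]` lies in `J`
    (∀ (a : ℂ) (g : MvPolynomial (Fin 3) ℂ), (∀ m ∈ g.support, m 2 = 0) →
      (X 0 - C a) * (X 2 - g) ∉ J) := by
  subst hJ
  let e1 : Fin 3 → DualNumber ℂ := ![DualNumber.eps,
    algebraMap ℂ (DualNumber ℂ) 1 * DualNumber.eps, algebraMap ℂ (DualNumber ℂ) 1]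
  let e2 : Fin 3 → DualNumber ℂ := ![DualNumber.eps,
    algebraMap ℂ (DualNumber ℂ) (-1) * DualNumber.eps, algebraMap ℂ (DualNumber ℂ) 0]
  have H1 := aev_zero 1 1 e1 rfl rfl rfl (Or.inl ⟨rfl, rfl⟩)
  have H2 := aev_zero (-1) 0 e2 rfl rfl rfl (Or.inr ⟨rfl, rfl⟩)
  have HC : ∀ g : MvPolynomial (Fin 3) ℂ, (∀ m ∈ g.support, m 2 = 0) →
      TrivSqZeroExt.fst (aeval e1 g) = TrivSqZeroExt.fst (aeval e2 g) := fun g hg =>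
    aev_congr e1 e2 (by simp [e1]) (by simp [e1]) (by simp [e2]) (by simp [e2]) g hg
  refine ⟨⟨?_, ?_⟩, ?_⟩
  · have hX : (X 0 * X 2 : MvPolynomial (Fin 3) ℂ) =
        monomial (Finsupp.single (0 : Fin 3) 1 + Finsupp.single (2 : Fin 3) 1) 1 := by
      simp [X, monomial_mul]
    have n0 : (Finsupp.single (0 : Fin 3) 1 : Fin 3 →₀ ℕ) ≠
        Finsupp.single (0 : Fin 3) 1 + Finsupp.single (2 : Fin 3) 1 := fun h => by
      simpa using DFunLike.congr_fun h 2
    have n1 : (Finsupp.single (1 : Fin 3) 1 : Fin 3 →₀ ℕ) ≠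
        Finsupp.single (0 : Fin 3) 1 + Finsupp.single (2 : Fin 3) 1 := fun h => by
      simpa using DFunLike.congr_fun h 2
    have hc : coeff (Finsupp.single (0 : Fin 3) 1 + Finsupp.single (2 : Fin 3) 1)
        (X 0 * X 2 - C (1 / 2 : ℂ) * X 0 - C (1 / 2 : ℂ) * X 1) ≠ 0 := by
      rw [hX]
      simp only [coeff_sub, coeff_C_mul, coeff_X, coeff_monomial, if_neg n0, if_neg n1]
      simp
    refine ⟨X 0 * X 2 - C (1 / 2 : ℂ) * X 0 - C (1 / 2 : ℂ) * X 1,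
      Ideal.subset_span (by simp), ?_, ?_, ?_⟩
    · intro h
      rw [h] at hc
      simp at hc
    · exact mem_support_iff.2 hc
    · intro e he hne
      rw [mem_support_iff, hX] at he
      simp only [coeff_sub, coeff_C_mul, coeff_X, coeff_monomial, if_neg hne.symm] at he
      by_cases ha : Finsupp.single 0 1 = e
      · subst ha
        exact ⟨2, by simp, fun i hi => by omega⟩
      · by_cases hb : Finsupp.single 1 1 = e
        · subst hb
          exact ⟨2, by simp, fun i hi => by omega⟩
        · simp [ha, hb] at he
  · rintro m' ⟨f, hf, -, hm, hlt⟩ ⟨u, hu⟩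
    have u0 := DFunLike.congr_fun hu 0
    have u1 := DFunLike.congr_fun hu 1
    have u2 := DFunLike.congr_fun hu 2
    simp at u0 u1 u2
    have hz := H1 f hf
    have hz2 := H2 f hf
    by_cases h2 : m' 2 = 0
    · exfalso
      -- support inside {0, x_1}
      have hs : ∀ e ∈ f.support, e 1 = 0 ∧ e 2 = 0 ∧ e 0 ≤ 1 := by
        intro e he
        by_cases hem : e = m'
        · subst hem; omega
        · obtain ⟨j, hj, hj'⟩ := hlt e he hem
          have a1 := hj' 1
          have a2 := hj' 2
          fin_cases j <;> simp at hj a1 a2 <;> omega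
      have hfe : f = C (coeff 0 f) + C (coeff (Finsupp.single 0 1) f) * X 0 := by
        ext e
        simp only [coeff_add, coeff_C, coeff_C_mul, coeff_X]
        by_cases ha : 0 = e
        · subst ha; simp
        by_cases hb : Finsupp.single 0 1 = e
        · subst hb; simp [ha]
        simp only [if_neg ha, if_neg hb, mul_zero, add_zero]
        by_contra hne
        obtain ⟨b1, b2, b0⟩ := hs e (mem_support_iff.2 hne)
        rcases Nat.le_one_iff_eq_zero_or_eq_one.1 b0 with h | h
        · apply ha; ext i; fin_cases i <;> simp [b0, b1, b2, h]
        · apply hb; ext i; fin_cases i <;> simp [b0, b1, b2, h]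
      rw [hfe] at hz
      have z1 := congrArg TrivSqZeroExt.fst hz
      have z2 := congrArg TrivSqZeroExt.snd hz
      simp [e1, TrivSqZeroExt.algebraMap_eq_inl] at z1 z2
      rw [hfe, z1, z2] at hm
      simp at hm
    · by_cases h0 : m' 0 = 0
      · exfalso
        have hm' : m' = Finsupp.single 2 1 := by
          ext i; fin_cases i <;> simp <;> omega
        have hg : ∀ m ∈ (f - C (coeff m' f) * X 2).support, m 2 = 0 := by
          intro m hmm
          rw [mem_support_iff] at hmm
          simp only [coeff_sub, coeff_C_mul, coeff_X, ← hm'] at hmm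
          by_cases hh : m' = m
          · subst hh; simp at hmm
          · simp [hh] at hmm
            obtain ⟨j, hj, hj'⟩ := hlt m (mem_support_iff.2 hmm) (Ne.symm hh)
            have a2 := hj' 2
            fin_cases j <;> simp at hj a2 <;> omega
        have := HC _ hg
        rw [map_sub, map_sub, hz, hz2] at this
        simp [e1, e2, TrivSqZeroExt.algebraMap_eq_inl] at this
        exact mem_support_iff.1 hm this
      · ext i; fin_cases i <;> simp <;> omega
  · intro a g hg hmem
    have hc := HC g hg
    have hz := H1 _ hmem
    have hz2 := H2 _ hmem
    have z1 := congrArg TrivSqZeroExt.fst hz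
    have z2 := congrArg TrivSqZeroExt.snd hz
    have z3 := congrArg TrivSqZeroExt.fst hz2
    have z4 := congrArg TrivSqZeroExt.snd hz2
    have q1 : e1 0 = DualNumber.eps := rfl
    have q2 : e1 2 = algebraMap ℂ (DualNumber ℂ) 1 := rfl
    have q3 : e2 0 = DualNumber.eps := rfl
    have q4 : e2 2 = algebraMap ℂ (DualNumber ℂ) 0 := rfl
    simp [q1, q2, q3, q4, TrivSqZeroExt.algebraMap_eq_inl] at z1 z2 z3 z4
    rw [hc] at z1 z2
    by_cases ha : a = 0
    · simp [ha] at z2 z4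
      grind
    · simp [ha] at z1 z3
      grind
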